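/- Fix an integer n ≥ 2 and define, for real p > 1, g₁(p) = (1/n) · e^{(p-1)n/p} · ((p-1)n/p)^{n/p} · Γ(1 - n/p, (p-1)n/p). Then g₁(p) = 1/n + O(p^{-1}) as p → ∞; that is, there exists a constant C > 0 such that |g₁(p) - 1/n| ≤ C/p for all sufficiently large p. -/

import Mathlib

open MeasureTheory Real Set

noncomputable def uiGamma (s x : ℝ) : ℝ := ∫ t in Set.Ioi x, t ^ (s - 1) * Real.exp (-t)

/-!
The recurrence `Γ(s + 1, x) = s Γ(s, x) + x ^ s e⁻ˣ` and the trivial comparison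
`0 ≤ x Γ(s, x) ≤ Γ(s + 1, x)` together confine `eˣ x ^ a Γ(1 - a, x)` to `[x / (x + a), 1]` for
`0 ≤ a`. With `x = (p - 1) n / p` and `a = n / p` one has `x + a = n`, so the lower end of this
interval is exactly `1 - 1 / p`.
-/

open Filter Topology

section UpperIncompleteGamma

variable (s : ℝ) {a x : ℝ}

lemma integrableOn_rpow_mul_exp_neg_Ioi (hx : 0 < x) :
    IntegrableOn (fun t : ℝ ↦ t ^ s * exp (-t)) (Ioi x) := by
  have continuousOn_integrand : ContinuousOn (fun t : ℝ ↦ t ^ s * exp (-t)) (Ici x) :=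
    (continuousOn_id.rpow_const fun t ht ↦ .inl (hx.trans_le ht).ne').mul continuousOn_id.neg.rexp
  refine integrable_of_isBigO_exp_neg one_half_pos continuousOn_integrand ?_
  simpa only [mul_comm] using (Gamma_integrand_isLittleO s).isBigO

lemma tendsto_rpow_mul_exp_neg_atTop :
    Tendsto (fun t : ℝ ↦ t ^ s * exp (-t)) atTop (𝓝 0) := by
  simpa only [neg_one_mul] using tendsto_rpow_mul_exp_neg_mul_atTop_nhds_zero s 1 one_pos

lemma hasDerivAt_rpow_mul_exp_neg (hx : x ≠ 0) :
    HasDerivAt (fun t : ℝ ↦ t ^ s * exp (-t))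
      (s * (x ^ (s - 1) * exp (-x)) - x ^ s * exp (-x)) x :=
  ((hasDerivAt_rpow_const (.inl hx)).mul (hasDerivAt_neg x).exp).congr_deriv (by ring)

lemma uiGamma_add_one_eq_integral (x : ℝ) :
    uiGamma (s + 1) x = ∫ t in Ioi x, t ^ s * exp (-t) := by
  rw [uiGamma, add_sub_cancel_right]

lemma uiGamma_nonneg (hx : 0 ≤ x) : 0 ≤ uiGamma s x :=
  setIntegral_nonneg measurableSet_Ioi fun _ ht ↦
    mul_nonneg (rpow_nonneg (hx.trans_lt ht).le _) (exp_pos _).le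

lemma uiGamma_add_one (hx : 0 < x) :
    uiGamma (s + 1) x = s * uiGamma s x + x ^ s * exp (-x) := by
  have integrable_left := (integrableOn_rpow_mul_exp_neg_Ioi (s - 1) hx).const_mul s
  have integrable_right := integrableOn_rpow_mul_exp_neg_Ioi s hx
  have integral_deriv :
      ∫ t in Ioi x, (s * (t ^ (s - 1) * exp (-t)) - t ^ s * exp (-t)) = 0 - x ^ s * exp (-x) :=
    integral_Ioi_of_hasDerivAt_of_tendsto'
      (fun t ht ↦ hasDerivAt_rpow_mul_exp_neg s (hx.trans_le ht).ne')
      (integrable_left.sub integrable_right) (tendsto_rpow_mul_exp_neg_atTop s)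
  rw [integral_sub integrable_left integrable_right, integral_const_mul, ← uiGamma,
    ← uiGamma_add_one_eq_integral] at integral_deriv
  linarith

lemma mul_uiGamma_le_uiGamma_add_one (hx : 0 < x) : x * uiGamma s x ≤ uiGamma (s + 1) x := by
  rw [uiGamma_add_one_eq_integral, uiGamma, ← integral_const_mul]
  refine setIntegral_mono_on ((integrableOn_rpow_mul_exp_neg_Ioi _ hx).const_mul x)
    (integrableOn_rpow_mul_exp_neg_Ioi s hx) measurableSet_Ioi fun t ht ↦ ?_
  have ht₀ : 0 < t := hx.trans ht
  calc x * (t ^ (s - 1) * exp (-t))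
      ≤ t * (t ^ (s - 1) * exp (-t)) := by gcongr; exact ht.le
    _ = t ^ s * exp (-t) := by rw [rpow_sub_one ht₀.ne']; field_simp

variable {s}

lemma uiGamma_add_one_le (hs : s ≤ 0) (hx : 0 < x) :
    uiGamma (s + 1) x ≤ x ^ s * exp (-x) := by
  rw [uiGamma_add_one s hx]
  exact add_le_of_nonpos_left (mul_nonpos_of_nonpos_of_nonneg hs (uiGamma_nonneg s hx.le))

lemma mul_rpow_mul_exp_neg_le_sub_mul_uiGamma_add_one (hs : s ≤ 0) (hx : 0 < x) :
    x * (x ^ s * exp (-x)) ≤ (x - s) * uiGamma (s + 1) x :=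
  calc x * (x ^ s * exp (-x))
      = x * uiGamma (s + 1) x + -s * (x * uiGamma s x) := by rw [uiGamma_add_one s hx]; ring
    _ ≤ x * uiGamma (s + 1) x + -s * uiGamma (s + 1) x := by
        gcongr
        · exact neg_nonneg.mpr hs
        · exact mul_uiGamma_le_uiGamma_add_one s hx
    _ = (x - s) * uiGamma (s + 1) x := by ring

lemma exp_mul_rpow_mul_rpow_neg_mul_exp_neg (a : ℝ) (hx : 0 < x) :
    exp x * x ^ a * (x ^ (-a) * exp (-x)) = 1 := by
  rw [rpow_neg hx.le, exp_neg]
  field_simp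

lemma exp_mul_rpow_mul_uiGamma_one_sub_le_one (ha : 0 ≤ a) (hx : 0 < x) :
    exp x * x ^ a * uiGamma (1 - a) x ≤ 1 :=
  calc exp x * x ^ a * uiGamma (1 - a) x
      ≤ exp x * x ^ a * (x ^ (-a) * exp (-x)) := by
        gcongr
        rw [sub_eq_neg_add]
        exact uiGamma_add_one_le (neg_nonpos.mpr ha) hx
    _ = 1 := exp_mul_rpow_mul_rpow_neg_mul_exp_neg a hx

lemma div_add_le_exp_mul_rpow_mul_uiGamma_one_sub (ha : 0 ≤ a) (hx : 0 < x) :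
    x / (x + a) ≤ exp x * x ^ a * uiGamma (1 - a) x := by
  rw [div_le_iff₀' (by positivity)]
  calc x = exp x * x ^ a * (x * (x ^ (-a) * exp (-x))) := by
        rw [mul_left_comm, exp_mul_rpow_mul_rpow_neg_mul_exp_neg a hx, mul_one]
    _ ≤ exp x * x ^ a * ((x - -a) * uiGamma (-a + 1) x) := by
        gcongr exp x * x ^ a * ?_
        exact mul_rpow_mul_exp_neg_le_sub_mul_uiGamma_add_one (neg_nonpos.mpr ha) hx
    _ = (x + a) * (exp x * x ^ a * uiGamma (1 - a) x) := by
        rw [sub_neg_eq_add, neg_add_eq_sub, mul_left_comm]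

lemma abs_exp_mul_rpow_mul_uiGamma_one_sub_sub_one_le (ha : 0 ≤ a) (hx : 0 < x) :
    |exp x * x ^ a * uiGamma (1 - a) x - 1| ≤ a / (x + a) := by
  have lower := div_add_le_exp_mul_rpow_mul_uiGamma_one_sub ha hx
  have upper := exp_mul_rpow_mul_uiGamma_one_sub_le_one ha hx
  have complement : a / (x + a) = 1 - x / (x + a) := by field_simp; ring
  rw [abs_sub_comm, abs_of_nonneg (sub_nonneg.mpr upper), complement]
  exact sub_le_sub_left lower 1

end UpperIncompleteGamma

theorem stmt_15_general {ν p : ℝ} (hν : 0 < ν) (hp : 1 < p) :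
    |1 / ν * exp ((p - 1) * ν / p) * ((p - 1) * ν / p) ^ (ν / p) *
        uiGamma (1 - ν / p) ((p - 1) * ν / p) - 1 / ν| ≤ 1 / ν / p := by
  have hp₀ : 0 < p := one_pos.trans hp
  have hx : 0 < (p - 1) * ν / p := div_pos (mul_pos (sub_pos.mpr hp) hν) hp₀
  have sum_eq : (p - 1) * ν / p + ν / p = ν := by field_simp; ring
  have bound := abs_exp_mul_rpow_mul_uiGamma_one_sub_sub_one_le (div_pos hν hp₀).le hx
  rw [sum_eq, div_div_cancel_left' hν.ne'] at bound
  calc _ = |1 / ν * (exp ((p - 1) * ν / p) * ((p - 1) * ν / p) ^ (ν / p) *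
              uiGamma (1 - ν / p) ((p - 1) * ν / p) - 1)| := congrArg abs (by ring)
    _ = 1 / ν * |exp ((p - 1) * ν / p) * ((p - 1) * ν / p) ^ (ν / p) *
          uiGamma (1 - ν / p) ((p - 1) * ν / p) - 1| := by
        rw [abs_mul, abs_of_pos (one_div_pos.mpr hν)]
    _ ≤ 1 / ν * p⁻¹ := by gcongr
    _ = 1 / ν / p := (div_eq_mul_inv _ _).symm

theorem stmt_15 (n : ℕ) (hn : 2 ≤ n) :
    ∃ C > (0 : ℝ), ∃ P : ℝ, 1 < P ∧ ∀ p : ℝ, P ≤ p →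
      |(1 / (n : ℝ)) * Real.exp ((p - 1) * n / p) * ((p - 1) * n / p) ^ ((n : ℝ) / p) *
          uiGamma (1 - (n : ℝ) / p) ((p - 1) * n / p) - 1 / (n : ℝ)| ≤ C / p := by
  have hn₀ : (0 : ℝ) < n := Nat.cast_pos.mpr (two_pos.trans_le hn)
  exact ⟨1 / n, one_div_pos.mpr hn₀, 2, one_lt_two, fun _ hp ↦
    stmt_15_general hn₀ (one_lt_two.trans_le hp)⟩
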